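/- Let (X,T) and (Y,S) be topological dynamical systems on compact metric spaces, F: X×Y → ℝ continuous, and (n_k) a strictly increasing sequence of positive integers. If x ∈ X is quasi-generic along (n_k) for μ ∈ M_T(X) and y ∈ Y is quasi-generic along (n_k) for ν ∈ M_S(Y), then F̄(μ,ν) := inf_{λ ∈ J(μ,ν)} ∫ F dλ ≤ liminf_k (1/n_k) ∑_{j=0}^{n_k−1} F(T^j x, S^j y). -/

import Mathlib

open MeasureTheory Filter

/-- A joining of `μ ∈ M_T(X)` and `ν ∈ M_S(Y)`. -/
def IsJoining2 {X Y : Type*} [MeasurableSpace X] [MeasurableSpace Y] (T : X → X) (S : Y → Y)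
    (μ : Measure X) (ν : Measure Y) (lam : Measure (X × Y)) : Prop :=
  IsProbabilityMeasure lam ∧ Measure.map (Prod.map T S) lam = lam ∧
    Measure.map Prod.fst lam = μ ∧ Measure.map Prod.snd lam = ν

/-- `F̄(μ,ν)`: infimum of `∫ F` over joinings of `μ` and `ν`. -/
noncomputable def Fbar {X Y : Type*} [MeasurableSpace X] [MeasurableSpace Y]
    (T : X → X) (S : Y → Y) (F : X × Y → ℝ) (μ : Measure X) (ν : Measure Y) : ℝ :=
  sInf {r : ℝ | ∃ lam : Measure (X × Y), IsJoining2 T S μ ν lam ∧ r = ∫ p, F p ∂lam}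

/-!
A weak-* limit point `lam` of the empirical measures along the orbit of `(x, y)` makes `(x, y)`
quasi-generic for `lam`. Quasi-genericity passes to factors and to the image of the point, and it
determines the measure: comparing `(x, y)` with its projections gives the marginals `μ` and `ν` of
`lam`, and comparing it with `(T x, S y)` gives invariance. The limit point can be taken along an
ultrafilter that realises the liminf, so the liminf is itself `∫ F` for some joining.
-/

open scoped ENNReal Topology

lemma birkhoffAverage_apply_of_semiconj (R : Type*) [DivisionSemiring R] {X Y M : Type*}
    [AddCommMonoid M] [Module R M] {T : X → X} {S : Y → Y} {π : X → Y}
    (h : Function.Semiconj π T S) (g : Y → M) (n : ℕ) (x : X) :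
    birkhoffAverage R S g n (π x) = birkhoffAverage R T (g ∘ π) n x := by
  simp only [birkhoffAverage, birkhoffSum, Function.comp_apply, (h.iterate_right _).eq]

lemma norm_birkhoffAverage_le (𝕜 : Type*) [RCLike 𝕜] {Z E : Type*} [NormedAddCommGroup E]
    [NormedSpace 𝕜 E] {g : Z → E} {C : ℝ} (hg : ∀ z, ‖g z‖ ≤ C) (T : Z → Z) (n : ℕ) (z : Z) :
    ‖birkhoffAverage 𝕜 T g n z‖ ≤ C := by
  have hC : 0 ≤ C := (norm_nonneg _).trans (hg z)
  calc ‖birkhoffAverage 𝕜 T g n z‖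
      = (n : ℝ)⁻¹ * ‖∑ j ∈ Finset.range n, g (T^[j] z)‖ := by
        simp [birkhoffAverage, birkhoffSum, norm_smul]
    _ ≤ (n : ℝ)⁻¹ * (n * C) := by
        gcongr
        simpa using norm_sum_le_of_le (Finset.range n) fun j _ => hg (T^[j] z)
    _ ≤ C := by
        rw [← mul_assoc]
        exact mul_le_of_le_one_left hC (inv_mul_le_one_of_le₀ le_rfl n.cast_nonneg)

section EmpiricalMeasure

variable {Z : Type*} [MeasurableSpace Z]

/-- The empirical measure of the orbit segment `z, T z, …, T^[n - 1] z`, whose integrals are the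
Birkhoff averages. It is the zero measure for `n = 0`. -/
noncomputable def empiricalMeasure (T : Z → Z) (n : ℕ) (z : Z) : Measure Z :=
  (n : ℝ≥0∞)⁻¹ • ∑ j ∈ Finset.range n, Measure.dirac (T^[j] z)

lemma empiricalMeasure_univ_le_one (T : Z → Z) (n : ℕ) (z : Z) :
    empiricalMeasure T n z Set.univ ≤ 1 := by
  simp [empiricalMeasure, ENNReal.inv_mul_le_one]

instance (T : Z → Z) (n : ℕ) (z : Z) : IsFiniteMeasure (empiricalMeasure T n z) :=
  ⟨(empiricalMeasure_univ_le_one T n z).trans_lt ENNReal.one_lt_top⟩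

lemma integral_empiricalMeasure [MeasurableSingletonClass Z] {E : Type*} [NormedAddCommGroup E]
    [NormedSpace ℝ E] [CompleteSpace E] (T : Z → Z) (f : Z → E) (n : ℕ) (z : Z) :
    ∫ w, f w ∂empiricalMeasure T n z = birkhoffAverage ℝ T f n z := by
  have hf : ∀ j ∈ Finset.range n, Integrable f (Measure.dirac (T^[j] z)) :=
    fun _ _ => integrable_dirac enorm_lt_top
  simp [empiricalMeasure, birkhoffAverage, birkhoffSum, integral_finsetSum_measure hf]

end EmpiricalMeasure

/-- The point `x` is quasi-generic for `μ` along `n`: the Birkhoff averages over `n i` steps of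
every continuous function converge to its integral. The index `i` tends along an arbitrary filter
`l`, so that passing to a finer filter replaces passing to a subsequence. Real-valued test
functions suffice by linearity. -/
def IsQuasiGeneric {X ι : Type*} [TopologicalSpace X] [MeasurableSpace X] (T : X → X)
    (μ : Measure X) (n : ι → ℕ) (l : Filter ι) (x : X) : Prop :=
  ∀ f : C(X, ℝ), Tendsto (fun i => birkhoffAverage ℝ T f (n i) x) l (𝓝 (∫ z, f z ∂μ))

namespace IsQuasiGeneric

variable {X ι : Type*} [TopologicalSpace X] [MeasurableSpace X]
  {T : X → X} {μ μ' : Measure X} {n : ι → ℕ} {l l' : Filter ι} {x : X}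

lemma mono (hx : IsQuasiGeneric T μ n l x) (hl : l' ≤ l) : IsQuasiGeneric T μ n l' x :=
  fun f => (hx f).mono_left hl

lemma isProbabilityMeasure [l.NeBot] (hn : Tendsto n l atTop) (hx : IsQuasiGeneric T μ n l x) :
    IsProbabilityMeasure μ := by
  have hone : Tendsto (fun i => birkhoffAverage ℝ T (1 : C(X, ℝ)) (n i) x) l (𝓝 1) := by
    refine tendsto_const_nhds.congr' ?_
    filter_upwards [hn.eventually_ne_atTop 0] with i hi
    simp [birkhoffAverage, birkhoffSum, hi]
  have huniv : μ.real Set.univ = 1 := by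
    simpa using tendsto_nhds_unique (hx 1) hone
  exact ⟨by simpa [Measure.real, ENNReal.toReal_eq_one_iff] using huniv⟩

lemma map [OpensMeasurableSpace X] {Y : Type*} [TopologicalSpace Y] [MeasurableSpace Y]
    [BorelSpace Y] {S : Y → Y} {π : X → Y} (hπ : Continuous π) (h : Function.Semiconj π T S)
    (hx : IsQuasiGeneric T μ n l x) : IsQuasiGeneric S (μ.map π) n l (π x) := by
  intro f
  rw [integral_map hπ.aemeasurable f.continuous.aestronglyMeasurable]
  simp only [birkhoffAverage_apply_of_semiconj ℝ h]
  exact hx (f.comp ⟨π, hπ⟩)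

lemma apply [CompactSpace X] (hn : Tendsto n l atTop) (hx : IsQuasiGeneric T μ n l x) :
    IsQuasiGeneric T μ n l (T x) := by
  intro f
  have hsub := (tendsto_birkhoffAverage_apply_sub_birkhoffAverage' ℝ
    (isCompact_range f.continuous).isBounded T x).comp hn
  simpa using hsub.add (hx f)

lemma measure_unique [CompactSpace X] [HasOuterApproxClosed X] [BorelSpace X] [l.NeBot]
    [IsFiniteMeasure μ] [IsFiniteMeasure μ']
    (hx : IsQuasiGeneric T μ n l x) (hx' : IsQuasiGeneric T μ' n l x) : μ = μ' :=
  ext_of_forall_integral_eq_of_IsFiniteMeasure fun f =>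
    tendsto_nhds_unique (hx f.toContinuousMap) (hx' f.toContinuousMap)

lemma map_eq_self [CompactSpace X] [HasOuterApproxClosed X] [BorelSpace X] [l.NeBot]
    [IsFiniteMeasure μ] (hT : Continuous T) (hn : Tendsto n l atTop)
    (hx : IsQuasiGeneric T μ n l x) : μ.map T = μ :=
  (hx.map hT (Function.Commute.refl T)).measure_unique (hx.apply hn)

end IsQuasiGeneric

lemma exists_isQuasiGeneric {Z ι : Type*} [TopologicalSpace Z] [CompactSpace Z] [T2Space Z]
    [MeasurableSpace Z] [BorelSpace Z] (T : Z → Z) (n : ι → ℕ) (U : Ultrafilter ι) (z : Z) :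
    ∃ lam : Measure Z, IsFiniteMeasure lam ∧ IsQuasiGeneric T lam n U z := by
  let P : ι → FiniteMeasure Z := fun i => ⟨empiricalMeasure T (n i) z, inferInstance⟩
  have hmass : ∀ i, (P i).mass ≤ 1 := fun i =>
    ENNReal.coe_le_coe.1 <| by
      rw [FiniteMeasure.ennreal_mass]
      exact empiricalMeasure_univ_le_one T (n i) z
  obtain ⟨lam, -, hlam⟩ :=
    (isCompact_setOfPred_finiteMeasure_le_of_compactSpace Z 1).ultrafilter_le_nhds (U.map P)
      (le_principal_iff.2 <| mem_map.2 <| univ_mem' hmass)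
  refine ⟨lam, inferInstance, fun f => ?_⟩
  have hlim := FiniteMeasure.tendsto_iff_forall_integral_tendsto.1 hlam
    (BoundedContinuousFunction.mkOfCompact f)
  simpa [P, integral_empiricalMeasure] using hlim

lemma Fbar_le_integral_of_norm_le {X Y : Type*} [MeasurableSpace X] [MeasurableSpace Y]
    {T : X → X} {S : Y → Y} {F : X × Y → ℝ} {C : ℝ} (hF : ∀ p, ‖F p‖ ≤ C) {μ : Measure X}
    {ν : Measure Y} {lam : Measure (X × Y)} (hlam : IsJoining2 T S μ ν lam) :
    Fbar T S F μ ν ≤ ∫ p, F p ∂lam := by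
  refine csInf_le ⟨-C, ?_⟩ ⟨lam, hlam, rfl⟩
  rintro _ ⟨lam', ⟨_, -⟩, rfl⟩
  have hint : ‖∫ p, F p ∂lam'‖ ≤ C := by
    simpa using norm_integral_le_of_norm_le_const (μ := lam') (.of_forall hF)
  exact (abs_le.1 hint).1

section Joining

variable {X Y ι : Type*}
  [TopologicalSpace X] [CompactSpace X] [TopologicalSpace.MetrizableSpace X]
  [MeasurableSpace X] [BorelSpace X]
  [TopologicalSpace Y] [CompactSpace Y] [TopologicalSpace.MetrizableSpace Y]
  [MeasurableSpace Y] [BorelSpace Y]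
  {T : X → X} {S : Y → Y} {F : X × Y → ℝ} {μ : Measure X} {ν : Measure Y}
  {n : ι → ℕ} {l : Filter ι} {x : X} {y : Y}

lemma exists_isJoining2_isQuasiGeneric (hT : Continuous T) (hS : Continuous S)
    {U : Ultrafilter ι} (hn : Tendsto n U atTop)
    (hx : IsQuasiGeneric T μ n U x) (hy : IsQuasiGeneric S ν n U y) :
    ∃ lam, IsJoining2 T S μ ν lam ∧ IsQuasiGeneric (Prod.map T S) lam n U (x, y) := by
  obtain ⟨lam, _, hlam⟩ := exists_isQuasiGeneric (Prod.map T S) n U (x, y)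
  have := hx.isProbabilityMeasure hn
  have := hy.isProbabilityMeasure hn
  have hfst : lam.map Prod.fst = μ := (hlam.map continuous_fst fun _ => rfl).measure_unique hx
  have hsnd : lam.map Prod.snd = ν := (hlam.map continuous_snd fun _ => rfl).measure_unique hy
  exact ⟨lam, ⟨hlam.isProbabilityMeasure hn, hlam.map_eq_self (hT.prodMap hS) hn, hfst, hsnd⟩,
    hlam⟩

theorem exists_isJoining2_integral_eq_liminf [l.NeBot] (hT : Continuous T) (hS : Continuous S)
    (hF : Continuous F) (hn : Tendsto n l atTop)
    (hx : IsQuasiGeneric T μ n l x) (hy : IsQuasiGeneric S ν n l y) :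
    ∃ lam, IsJoining2 T S μ ν lam ∧
      ∫ p, F p ∂lam = liminf (fun i => birkhoffAverage ℝ (Prod.map T S) F (n i) (x, y)) l := by
  obtain ⟨C, hC⟩ := (isCompact_range hF).isBounded.exists_norm_le
  have hbdd : ∀ i, |birkhoffAverage ℝ (Prod.map T S) F (n i) (x, y)| ≤ C := fun i =>
    norm_birkhoffAverage_le ℝ (fun p => hC _ ⟨p, rfl⟩) _ _ _
  have hcluster := MapClusterPt.liminf
    (isBoundedUnder_of ⟨C, fun i => (abs_le.1 (hbdd i)).2⟩ :
      l.IsBoundedUnder (· ≤ ·) _).isCoboundedUnder_ge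
    (isBoundedUnder_of ⟨-C, fun i => (abs_le.1 (hbdd i)).1⟩)
  obtain ⟨U, hU, hlim⟩ := mapClusterPt_iff_ultrafilter.1 hcluster
  obtain ⟨lam, hlam, hgen⟩ :=
    exists_isJoining2_isQuasiGeneric hT hS (hn.mono_left hU) (hx.mono hU) (hy.mono hU)
  exact ⟨lam, hlam, tendsto_nhds_unique (hgen ⟨F, hF⟩) hlim⟩

theorem stmt14_general [l.NeBot] (hT : Continuous T) (hS : Continuous S)
    (hF : Continuous F) (hn : Tendsto n l atTop)
    (hx : IsQuasiGeneric T μ n l x) (hy : IsQuasiGeneric S ν n l y) :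
    Fbar T S F μ ν ≤ liminf (fun i => birkhoffAverage ℝ (Prod.map T S) F (n i) (x, y)) l := by
  obtain ⟨lam, hlam, hint⟩ := exists_isJoining2_integral_eq_liminf hT hS hF hn hx hy
  obtain ⟨C, hC⟩ := (isCompact_range hF).isBounded.exists_norm_le
  exact hint ▸ Fbar_le_integral_of_norm_le (fun p => hC _ ⟨p, rfl⟩) hlam

end Joining

/-- `F̄(μ,ν)` bounds from below the liminf of the ergodic averages
of `F` along a pair of quasi-generic points. -/
theorem stmt14 {X Y : Type*}
    [MetricSpace X] [CompactSpace X] [MeasurableSpace X] [BorelSpace X]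
    [MetricSpace Y] [CompactSpace Y] [MeasurableSpace Y] [BorelSpace Y]
    (T : X → X) (hT : Continuous T) (S : Y → Y) (hS : Continuous S)
    (F : X × Y → ℝ) (hF : Continuous F)
    (nk : ℕ → ℕ) (hnk : StrictMono nk) (hpos : ∀ k, 0 < nk k)
    (μ : Measure X) (hμp : IsProbabilityMeasure μ) (hμ : Measure.map T μ = μ)
    (ν : Measure Y) (hνp : IsProbabilityMeasure ν) (hν : Measure.map S ν = ν)
    (x : X) (y : Y)
    (hqx : ∀ f : C(X, ℝ),
      Tendsto (fun k => (nk k : ℝ)⁻¹ * ∑ j ∈ Finset.range (nk k), f (T^[j] x)) atTop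
        (nhds (∫ z, f z ∂μ)))
    (hqy : ∀ g : C(Y, ℝ),
      Tendsto (fun k => (nk k : ℝ)⁻¹ * ∑ j ∈ Finset.range (nk k), g (S^[j] y)) atTop
        (nhds (∫ z, g z ∂ν))) :
    Fbar T S F μ ν
      ≤ liminf (fun k => (nk k : ℝ)⁻¹ * ∑ j ∈ Finset.range (nk k), F (T^[j] x, S^[j] y)) atTop := by
  simpa [birkhoffAverage, birkhoffSum] using
    stmt14_general hT hS hF hnk.tendsto_atTop hqx hqy
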